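/- The generalised ant with rule word LLRLRL has infinitely many highways: the set of integers N for which LLRLRL admits a highway of period N and drift (−2,−2) is infinite (it contains 220+24n for every n ∈ ℕ), and for a fixed drift (−2,−2) a single highway configuration can be a highway of at most one period N (since T_{LLRLRL} has no periodic points), so these highways are pairwise distinct. -/

import Mathlib

/-- Cells of the grid `ℤ²`. -/
abbrev Cell : Type := ℤ × ℤ

/-- The four unit directions of `ℤ²` (the state set `Q`). -/
inductive Dir : Type
  | E | N | W | S
deriving DecidableEq

/-- Rotation by 90° counterclockwise. -/
def Dir.left : Dir → Dir
  | .E => .N | .N => .W | .W => .S | .S => .E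

/-- Rotation by 90° clockwise. -/
def Dir.right : Dir → Dir
  | .E => .S | .S => .W | .W => .N | .N => .E

/-- The unit vector of a direction. -/
def Dir.vec : Dir → Cell
  | .E => (1, 0) | .N => (0, 1) | .W => (-1, 0) | .S => (0, -1)

/-- Configurations: a picture `ℤ² → ℤ/nℤ`, a position and a direction. -/
abbrev Config (n : ℕ) : Type := (Cell → ZMod n) × Cell × Dir

/-- One step of the generalised ant whose rule word over the alphabet `ℤ/nℤ` is
described by `isL : ZMod n → Bool` (`isL a = true` iff the ant turns left on symbol
`a`): the symbol under the ant is increased by `1 (mod n)`, the ant turns left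
(counterclockwise) or right (clockwise), and moves one step in its new direction. -/
def antStep (n : ℕ) (isL : ZMod n → Bool) (cfg : Config n) : Config n :=
  let C := cfg.1
  let p := cfg.2.1
  let d' := if isL (C p) then cfg.2.2.left else cfg.2.2.right
  (Function.update C p (C p + 1), p + d'.vec, d')


/-- `IsHighway n isL N drift S P p d` : the pattern `P` (supported on the finite set
`S`, extended by `0` outside `S`), together with the position `p ∈ S` and the
direction `d`, is a highway of period `N` and drift `drift` for the generalised ant
with rule `isL` over the alphabet `ℤ/nℤ`: the ant stays in `S` during the first `N`
steps, after `N` steps it is at `p + drift` in direction `d`, and the pattern is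
reproduced shifted by `drift` (cells of `S` whose shift leaves `S` must carry `0`). -/
def IsHighway (n : ℕ) (isL : ZMod n → Bool) (N : ℕ) (drift : Cell)
    (S : Set Cell) (P : Cell → ZMod n) (p : Cell) (d : Dir) : Prop :=
  S.Finite ∧ p ∈ S ∧ (∀ q : Cell, q ∉ S → P q = 0) ∧
  (∀ t : ℕ, t < N → ((antStep n isL)^[t] (P, p, d)).2.1 ∈ S) ∧
  ((antStep n isL)^[N] (P, p, d)).2.1 = p + drift ∧
  ((antStep n isL)^[N] (P, p, d)).2.2 = d ∧
  (∀ q : Cell, q ∈ S →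
    (q + drift ∈ S → ((antStep n isL)^[N] (P, p, d)).1 (q + drift) = P q) ∧
    (q + drift ∉ S → P q = 0))

/-- The rule word `LLRLRL`: the ant turns left on symbols `0, 1, 3, 5` and right on
symbols `2, 4` (alphabet `ℤ/6ℤ`). -/
def isLLRLRL : ZMod 6 → Bool :=
  fun a => decide (a.val = 0 ∨ a.val = 1 ∨ a.val = 3 ∨ a.val = 5)

namespace Ant

/-! ### Column-coded window simulation -/

def dg (c k : ℕ) : ℕ := c / 10 ^ k % 10

def nc (c k : ℕ) : ℕ := if dg c k = 5 then c - 5 * 10 ^ k else c + 10 ^ k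

def nd (c k : ℕ) (d : Dir) : Dir := if dg c k = 2 ∨ dg c k = 4 then d.right else d.left

def mv : Dir → ℕ → ℕ → Option (ℕ × ℕ)
  | .E, x, k => some (x + 1, k)
  | .S, x, k => some (x, k + 1)
  | .W, 0, _ => none
  | .W, x + 1, k => some (x, k)
  | .N, _, 0 => none
  | .N, x, k + 1 => some (x, k)

abbrev St : Type := List ℕ × ℕ × ℕ × Dir

def wstep (s : St) : Option St :=
  (s.1[s.2.1]?).bind fun c =>
    if s.2.2.1 < 9 ∧ dg c s.2.2.1 ≤ 5 then
      (mv (nd c s.2.2.1 s.2.2.2) s.2.1 s.2.2.1).map fun q =>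
        (s.1.set s.2.1 (nc c s.2.2.1), q.1, q.2, nd c s.2.2.1 s.2.2.2)
    else none

def wrun : ℕ → St → Option St
  | 0, s => some s
  | t + 1, s => (wstep s).bind (wrun t)

theorem wstep_some {L : List ℕ} {x k : ℕ} {d : Dir} {s' : St} :
    wstep (L, x, k, d) = some s' ↔ ∃ c x' k', L[x]? = some c ∧ k < 9 ∧ dg c k ≤ 5 ∧
      mv (nd c k d) x k = some (x', k') ∧ s' = (L.set x (nc c k), x', k', nd c k d) := by
  unfold wstep
  constructor
  · intro h
    simp only [Option.bind_eq_some_iff] at h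
    obtain ⟨c, hc, h⟩ := h
    split_ifs at h with h1
    simp only [Option.map_eq_some_iff] at h
    obtain ⟨⟨x', k'⟩, h2, h3⟩ := h
    exact ⟨c, x', k', hc, h1.1, h1.2, h2, h3.symm⟩
  · rintro ⟨c, x', k', hc, h1, h2, h3, rfl⟩
    simp [hc, h1, h2, h3]

theorem wrun_add (t u : ℕ) (s : St) : wrun (t + u) s = (wrun t s).bind (wrun u) := by
  induction t generalizing s with
  | zero => simp [wrun]
  | succ t ih =>
    rw [Nat.succ_add]
    simp only [wrun, Option.bind_assoc]
    congr 1
    funext a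
    exact ih a

theorem wrun_trans {t u : ℕ} {a b c : St} (h1 : wrun t a = some b) (h2 : wrun u b = some c) :
    wrun (t + u) a = some c := by
  rw [wrun_add, h1]; exact h2

theorem mv_add {d : Dir} {x k x' k' : ℕ} (a : ℕ) (h : mv d x k = some (x', k')) :
    mv d (a + x) k = some (a + x', k') := by
  cases d
  · simp only [mv, Option.some.injEq, Prod.mk.injEq] at h ⊢; omega
  · cases k with
    | zero => simp [mv] at h
    | succ k => simp only [mv, Option.some.injEq, Prod.mk.injEq] at h ⊢; omega
  · cases x with
    | zero => simp [mv] at h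
    | succ x => rw [← Nat.add_assoc]; simp only [mv, Option.some.injEq, Prod.mk.injEq] at h ⊢; omega
  · simp only [mv, Option.some.injEq, Prod.mk.injEq] at h ⊢; omega

theorem wstep_frame (A C : List ℕ) {B B' : List ℕ} {x k x' k' : ℕ} {d d' : Dir}
    (h : wstep (B, x, k, d) = some (B', x', k', d')) :
    wstep (A ++ (B ++ C), A.length + x, k, d) =
      some (A ++ (B' ++ C), A.length + x', k', d') := by
  rw [wstep_some] at h ⊢
  obtain ⟨c, x1, k1, h1, h2, h3, h4, h5⟩ := h
  simp only [Prod.mk.injEq] at h5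
  obtain ⟨rfl, rfl, rfl, rfl⟩ := h5
  obtain ⟨hx, hc⟩ := List.getElem?_eq_some_iff.1 h1
  refine ⟨c, A.length + x', k', ?_, h2, h3, mv_add _ h4, ?_⟩
  · rw [List.getElem?_append_right (by omega), Nat.add_sub_cancel_left,
      List.getElem?_append_left hx, h1]
  · rw [List.set_append_right _ _ (by omega), Nat.add_sub_cancel_left,
      List.set_append_left _ _ hx]

theorem wrun_frame (A C : List ℕ) (t : ℕ) {B B' : List ℕ} {x k x' k' : ℕ} {d d' : Dir}
    (h : wrun t (B, x, k, d) = some (B', x', k', d')) :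
    wrun t (A ++ (B ++ C), A.length + x, k, d) =
      some (A ++ (B' ++ C), A.length + x', k', d') := by
  induction t generalizing B x k d with
  | zero =>
    simp only [wrun, Option.some.injEq, Prod.mk.injEq] at h ⊢
    obtain ⟨rfl, rfl, rfl, rfl⟩ := h
    simp
  | succ t ih =>
    simp only [wrun, Option.bind_eq_some_iff] at h ⊢
    obtain ⟨⟨B1, x1, k1, d1⟩, h1, h2⟩ := h
    exact ⟨_, wstep_frame A C h1, ih h2⟩

/-- `n` copies of the two-column block `[m, m]`. -/
def rp (m : ℕ) : ℕ → List ℕ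
  | 0 => []
  | n + 1 => m :: m :: rp m n

theorem rp_length (m n : ℕ) : (rp m n).length = 2 * n := by
  induction n with
  | zero => rfl
  | succ n ih => simp [rp, ih]; omega

theorem rp_comm (m n : ℕ) : rp m n ++ [m, m] = rp m (n + 1) := by
  induction n with
  | zero => rfl
  | succ n ih => simp only [rp, List.cons_append, ih]

theorem pass_right {t m m' x k : ℕ} {d : Dir} {F : List ℕ}
    (h : wrun t (F ++ [m, m], x, k, d) = some ([m', m'] ++ F, x + 2, k, d)) (n : ℕ) :
    wrun (t * n) (F ++ rp m n, x, k, d) = some (rp m' n ++ F, x + 2 * n, k, d) := by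
  induction n with
  | zero => simp [wrun, rp]
  | succ n ih =>
    have h1 := wrun_frame [] (rp m n) t h
    have h2 := wrun_frame [m', m'] [] (t * n) ih
    simp only [List.nil_append, List.length_nil, Nat.zero_add, List.append_assoc,
      List.append_nil, List.length_cons, List.cons_append] at h1 h2
    have e : x + 2 = 0 + 1 + 1 + x := by omega
    rw [e] at h1
    have h3 := wrun_trans h1 h2
    rw [show t * (n + 1) = t + t * n by ring, show x + 2 * (n + 1) = 0 + 1 + 1 + (x + 2 * n) by ring]
    simpa [rp] using h3

theorem pass_left {t m m' x k : ℕ} {d : Dir} {F : List ℕ}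
    (h : wrun t ([m, m] ++ F, x + 2, k, d) = some (F ++ [m', m'], x, k, d)) (n : ℕ) :
    wrun (t * n) (rp m n ++ F, x + 2 * n, k, d) = some (F ++ rp m' n, x, k, d) := by
  induction n with
  | zero => simp [wrun, rp]
  | succ n ih =>
    have h1 := wrun_frame (rp m n) [] t h
    have h2 := wrun_frame [] [m', m'] (t * n) ih
    simp only [List.nil_append, List.length_nil, Nat.zero_add, List.append_nil] at h1 h2
    rw [rp_length, Nat.add_comm (2 * n) x] at h1
    have h3 := wrun_trans h1 (by simpa using h2)
    rw [show t * (n + 1) = t + t * n by ring,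
      show x + 2 * (n + 1) = 2 * n + (x + 2) by ring, ← rp_comm m n, ← rp_comm m' n]
    simpa using h3

theorem seg1 : wrun 60 ([0, 0, 230, 304, 22329, 22309, 2223199, 2540999, 1359999, 1359999, 1359999], 2, 0, .N)
    = some ([0, 2222, 2002, 221514, 253329, 22132309, 25323199, 24540999, 24459999] ++ [13459999, 11359999], 10, 6, .N) := by
  decide +kernel

theorem pass1 : wrun 12 ([13459999, 11359999] ++ [1359999, 1359999], 1, 6, .N)
    = some ([24459999, 24459999] ++ [13459999, 11359999], 1 + 2, 6, .N) := by
  decide +kernel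

theorem seg2 : wrun 20 ([13459999, 11359999, 1359999, 2459999, 3599999], 1, 6, .N)
    = some ([24459999, 24559999, 13509999, 13509999, 4099999], 1, 4, .N) := by
  decide +kernel

theorem pass2 : wrun 4 ([24459999, 24459999] ++ [24459999, 24559999], 1 + 2, 4, .N)
    = some ([24459999, 24559999] ++ [24509999, 24509999], 1, 4, .N) := by
  decide +kernel

theorem seg3 : wrun 110 ([0, 2222, 2002, 221514, 253329, 22132309, 25323199, 24540999, 24459999, 24459999, 24559999], 10, 4, .N)
    = some ([22000, 25432, 2221313, 2005235, 221525159, 253310019, 135450299, 134551999, 134509999, 124509999, 24509999], 9, 7, .N) := by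
  decide +kernel

theorem pass3 : wrun 4 ([124509999, 24509999] ++ [24509999, 24509999], 0, 7, .N)
    = some ([134509999, 134509999] ++ [124509999, 24509999], 0 + 2, 7, .N) := by
  decide +kernel

theorem seg4 : wrun 36 ([124509999, 24509999, 13509999, 13509999, 4099999], 0, 7, .N)
    = some ([135509999, 245009999, 355009999, 310509999, 235099999], 0, 5, .N) := by
  decide +kernel

theorem pass4 : wrun 4 ([134509999, 134509999] ++ [135509999], 0 + 2, 5, .N)
    = some ([135509999] ++ [135009999, 135009999], 0, 5, .N) := by
  decide +kernel

theorem seg5 : wrun 42 ([22000, 25432, 2221313, 2005235, 221525159, 253310019, 135450299, 134551999, 134509999, 135509999], 9, 5, .N)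
    = some ([23000, 30432, 2232313, 2230235, 222311159, 254052019, 135010299, 135051999, 135009999, 135009999], 0, 2, .N) := by
  decide +kernel

theorem base0 : wrun 220 ([0, 0, 230, 304, 22329, 22309, 2223199, 2540999, 2459999, 3599999], 2, 0, .N)
    = some ([23000, 30432, 2232313, 2230235, 222311159, 254052019, 245010299, 355051999, 310509999, 235099999], 0, 2, .N) := by
  decide +kernel

theorem base1 : wrun 244 ([0, 0, 230, 304, 22329, 22309, 2223199, 2540999, 1359999, 1359999, 2459999, 3599999], 2, 0, .N)
    = some ([23000, 30432, 2232313, 2230235, 222311159, 254052019, 135010299, 135051999, 245009999, 355009999, 310509999, 235099999], 0, 2, .N) := by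
  decide +kernel

def D (j : ℕ) : List ℕ :=
  [0, 0, 230, 304, 22329, 22309, 2223199, 2540999, 1359999, 1359999, 1359999] ++
    (rp 1359999 j ++ [1359999, 2459999, 3599999])

def E (j : ℕ) : List ℕ :=
  [23000, 30432, 2232313, 2230235, 222311159, 254052019, 135010299, 135051999, 135009999, 135009999] ++
    (rp 135009999 j ++ [245009999, 355009999, 310509999, 235099999])

theorem full (j : ℕ) : wrun (268 + 24 * j) (D j, 2, 0, .N) = some (E j, 0, 2, .N) := by
  have h1 := wrun_frame [] (rp 1359999 j ++ [1359999, 2459999, 3599999]) _ seg1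
  have h2 := wrun_frame [0, 2222, 2002, 221514, 253329, 22132309, 25323199, 24540999, 24459999]
    [1359999, 2459999, 3599999] _ (pass_right pass1 j)
  have h3 := wrun_frame ([0, 2222, 2002, 221514, 253329, 22132309, 25323199, 24540999, 24459999] ++ rp 24459999 j)
    [] _ seg2
  have h4 := wrun_frame [0, 2222, 2002, 221514, 253329, 22132309, 25323199, 24540999, 24459999]
    [13509999, 13509999, 4099999] _ (pass_left pass2 j)
  have h5 := wrun_frame [] (rp 24509999 j ++ [13509999, 13509999, 4099999]) _ seg3
  have h6 := wrun_frame [22000, 25432, 2221313, 2005235, 221525159, 253310019, 135450299, 134551999, 134509999]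
    [13509999, 13509999, 4099999] _ (pass_right pass3 j)
  have h7 := wrun_frame ([22000, 25432, 2221313, 2005235, 221525159, 253310019, 135450299, 134551999, 134509999] ++ rp 134509999 j)
    [] _ seg4
  have h8 := wrun_frame [22000, 25432, 2221313, 2005235, 221525159, 253310019, 135450299, 134551999, 134509999]
    [245009999, 355009999, 310509999, 235099999] _ (pass_left pass4 j)
  have h9 := wrun_frame [] (rp 135009999 j ++ [245009999, 355009999, 310509999, 235099999]) _ seg5
  simp only [List.nil_append, List.append_nil, List.length_nil, Nat.zero_add,
    rp_length, List.length_cons, List.append_assoc, List.cons_append, Nat.reduceAdd, Nat.add_zero,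
    ← Nat.add_assoc] at h1 h2 h3 h4 h5 h6 h7 h8 h9
  have e : 2 * j + 1 + 1 + 1 + 1 + 1 + 1 + 1 + 1 + 1 + 1 = 10 + 2 * j := by omega
  rw [e] at h3
  rw [Nat.add_comm (2 * j) 9] at h7
  have := wrun_trans (wrun_trans (wrun_trans (wrun_trans (wrun_trans (wrun_trans (wrun_trans
    (wrun_trans h1 h2) h3) h4) h5) h6) h7) h8) h9
  rw [show 268 + 24 * j = 60 + 12 * j + 20 + 4 * j + 110 + 4 * j + 36 + 4 * j + 42 by ring]
  simpa [D, E] using this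

/-! ### Interpretation -/

theorem dg_add (c e k k' : ℕ) (h : dg c k + e ≤ 9) :
    dg (c + e * 10 ^ k) k' = if k' = k then dg c k + e else dg c k' := by
  unfold dg at *
  have hk : 0 < 10 ^ k := by positivity
  have hk' : 0 < 10 ^ k' := by positivity
  split_ifs with hkk
  · subst hkk
    rw [Nat.add_mul_div_right _ _ hk]; omega
  · rcases Nat.lt_or_gt_of_ne hkk with hlt | hlt
    · obtain ⟨r, rfl⟩ : ∃ r, k = k' + 1 + r := ⟨k - (k' + 1), by omega⟩
      rw [show e * 10 ^ (k' + 1 + r) = (10 * (e * 10 ^ r)) * 10 ^ k' by ring,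
        Nat.add_mul_div_right _ _ hk', Nat.add_mul_mod_self_left]
    · obtain ⟨r, rfl⟩ : ∃ r, k' = k + 1 + r := ⟨k' - (k + 1), by omega⟩
      rw [show 10 ^ (k + 1 + r) = 10 ^ k * 10 * 10 ^ r by ring, ← Nat.div_div_eq_div_mul,
        ← Nat.div_div_eq_div_mul, ← Nat.div_div_eq_div_mul, ← Nat.div_div_eq_div_mul,
        Nat.add_mul_div_right _ _ hk]
      congr 2
      omega

theorem dg_nc (c k k' : ℕ) (h : dg c k ≤ 5) :
    dg (nc c k) k' = if k' = k then (if dg c k = 5 then 0 else dg c k + 1) else dg c k' := by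
  unfold nc
  by_cases h5 : dg c k = 5
  · simp only [h5, if_true]
    have hle : 5 * 10 ^ k ≤ c := by
      have : 5 ≤ c / 10 ^ k := by
        rw [← h5]; exact Nat.mod_le _ _
      exact (Nat.le_div_iff_mul_le (by positivity)).1 this
    obtain ⟨c1, rfl⟩ : ∃ c1, c = c1 + 5 * 10 ^ k := ⟨c - 5 * 10 ^ k, by omega⟩
    rw [Nat.add_sub_cancel]
    have h0 : dg c1 k = 0 := by
      unfold dg at *
      rw [Nat.add_mul_div_right _ _ (by positivity)] at h5
      omega
    rw [dg_add c1 5 k k' (by omega)]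
    split_ifs with hk
    · subst hk; exact h0
    · rfl
  · simp only [h5, if_false]
    have := dg_add c 1 k k' (by omega)
    rwa [one_mul] at this

def SS (L : List ℕ) : Set Cell :=
  {q | 0 ≤ q.1 ∧ q.1 < L.length ∧ q.2 ≤ 0 ∧ -9 < q.2 ∧
    dg (L.getD q.1.toNat 0) (-q.2).toNat ≤ 5}

open Classical in
noncomputable def II (L : List ℕ) : Cell → ZMod 6 := fun q =>
  if q ∈ SS L then ((dg (L.getD q.1.toNat 0) (-q.2).toNat : ℕ) : ZMod 6) else 0

theorem mem_SS (L : List ℕ) (x k : ℕ) :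
    (((x : ℤ), -(k : ℤ)) : Cell) ∈ SS L ↔ x < L.length ∧ k < 9 ∧ dg (L.getD x 0) k ≤ 5 := by
  unfold SS
  simp only [Set.mem_ofPred_eq, Int.toNat_natCast, neg_neg]
  constructor
  · rintro ⟨h1, h2, h3, h4, h5⟩; exact ⟨by omega, by omega, h5⟩
  · rintro ⟨h1, h2, h3⟩; exact ⟨by omega, by omega, by omega, by omega, h3⟩

theorem exists_of_mem_SS {L : List ℕ} {q : Cell} (h : q ∈ SS L) :
    ∃ x k : ℕ, q = ((x : ℤ), -(k : ℤ)) := by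
  obtain ⟨h1, h2, h3, h4, h5⟩ := h
  refine ⟨q.1.toNat, (-q.2).toNat, ?_⟩
  ext <;> simp <;> omega

theorem SS_finite (L : List ℕ) : (SS L).Finite := by
  apply Set.Finite.subset (Set.finite_Icc ((0, -9) : ℤ × ℤ) ((L.length : ℤ), 0))
  rintro ⟨x, y⟩ ⟨h1, h2, h3, h4, h5⟩
  simp only [Set.mem_Icc, Prod.mk_le_mk] at *
  omega

theorem mv_vec {d : Dir} {x k x' k' : ℕ} (h : mv d x k = some (x', k')) :
    (((x : ℤ), -(k : ℤ)) : Cell) + d.vec = ((x' : ℤ), -(k' : ℤ)) := by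
  cases d
  · simp only [mv, Option.some.injEq, Prod.mk.injEq] at h
    obtain ⟨rfl, rfl⟩ := h
    simp [Dir.vec]
  · cases k with
    | zero => simp [mv] at h
    | succ k =>
      simp only [mv, Option.some.injEq, Prod.mk.injEq] at h
      obtain ⟨rfl, rfl⟩ := h
      simp [Dir.vec]
  · cases x with
    | zero => simp [mv] at h
    | succ x =>
      simp only [mv, Option.some.injEq, Prod.mk.injEq] at h
      obtain ⟨rfl, rfl⟩ := h
      simp [Dir.vec]
  · simp only [mv, Option.some.injEq, Prod.mk.injEq] at h
    obtain ⟨rfl, rfl⟩ := h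
    simp [Dir.vec]; ring

theorem getD_set (L : List ℕ) (x i c : ℕ) (hx : x < L.length) :
    (L.set x c).getD i 0 = if i = x then c else L.getD i 0 := by
  simp only [List.getD_eq_getElem?_getD, List.getElem?_set]
  by_cases h : x = i
  · subst h; simp [hx]
  · simp [h, Ne.symm h]

theorem SS_step {L : List ℕ} {x k c : ℕ} (h1 : L[x]? = some c) (h3 : dg c k ≤ 5) :
    SS (L.set x (nc c k)) = SS L := by
  obtain ⟨hx, hc⟩ := List.getElem?_eq_some_iff.1 h1
  have hg : L.getD x 0 = c := by simp [List.getD_eq_getElem?_getD, h1]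
  have key : ∀ i k' : ℕ, dg ((L.set x (nc c k)).getD i 0) k' ≤ 5 ↔ dg (L.getD i 0) k' ≤ 5 := by
    intro i k'
    rw [getD_set _ _ _ _ hx]
    split_ifs with h
    · subst h
      rw [hg, dg_nc _ _ _ h3]
      split_ifs with h4 h5
      · subst h4; omega
      · subst h4; omega
      · rfl
    · rfl
  ext q
  simp only [SS, Set.mem_ofPred_eq, List.length_set, key]

theorem isL_dg (v : ℕ) (h : v ≤ 5) : isLLRLRL ((v : ℕ) : ZMod 6) = !decide (v = 2 ∨ v = 4) := by
  interval_cases v <;> decide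

theorem step_sound {L L' : List ℕ} {x k x' k' : ℕ} {d d' : Dir}
    (h : wstep (L, x, k, d) = some (L', x', k', d')) :
    antStep 6 isLLRLRL (II L, ((x : ℤ), -(k : ℤ)), d) = (II L', ((x' : ℤ), -(k' : ℤ)), d') ∧
    SS L' = SS L ∧ (((x : ℤ), -(k : ℤ)) : Cell) ∈ SS L ∧ L'.length = L.length := by
  rw [wstep_some] at h
  obtain ⟨c, x1, k1, h1, h2, h3, h4, h5⟩ := h
  simp only [Prod.mk.injEq] at h5
  obtain ⟨rfl, rfl, rfl, rfl⟩ := h5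
  obtain ⟨hx, hc⟩ := List.getElem?_eq_some_iff.1 h1
  have hg : L.getD x 0 = c := by simp [List.getD_eq_getElem?_getD, h1]
  have hS := SS_step h1 h3
  have hm : (((x : ℤ), -(k : ℤ)) : Cell) ∈ SS L := by rw [mem_SS, hg]; exact ⟨hx, h2, h3⟩
  refine ⟨?_, hS, hm, by simp⟩
  have hI : II L ((x : ℤ), -(k : ℤ)) = ((dg c k : ℕ) : ZMod 6) := by
    unfold II; rw [if_pos hm]; simp only [Int.toNat_natCast, neg_neg, hg]
  have hd : (if isLLRLRL (II L ((x : ℤ), -(k : ℤ))) then d.left else d.right) = nd c k d := by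
    rw [hI, isL_dg _ h3]
    unfold nd
    by_cases h : dg c k = 2 ∨ dg c k = 4 <;> simp [h]
  unfold antStep
  simp only [hd, mv_vec h4, Prod.mk.injEq, and_true]
  funext q
  by_cases hq : q = ((x : ℤ), -(k : ℤ))
  · subst hq
    rw [Function.update_self, hI]
    unfold II
    rw [hS, if_pos hm]
    simp only [Int.toNat_natCast, neg_neg]
    rw [getD_set _ _ _ _ hx, if_pos rfl, dg_nc _ _ _ h3, if_pos rfl]
    split_ifs with h5
    · rw [h5]; decide
    · push_cast; rfl
  · rw [Function.update_of_ne hq]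
    unfold II
    rw [hS]
    split_ifs with hqm
    · obtain ⟨i, l, rfl⟩ := exists_of_mem_SS hqm
      simp only [Int.toNat_natCast, neg_neg]
      rw [getD_set _ _ _ _ hx]
      split_ifs with hi
      · subst hi
        have hl : l ≠ k := by rintro rfl; exact hq rfl
        rw [dg_nc _ _ _ h3, if_neg hl, hg]
      · rfl
    · rfl

theorem run_sound (t : ℕ) {L L' : List ℕ} {x k x' k' : ℕ} {d d' : Dir}
    (h : wrun t (L, x, k, d) = some (L', x', k', d')) :
    (antStep 6 isLLRLRL)^[t] (II L, ((x : ℤ), -(k : ℤ)), d) = (II L', ((x' : ℤ), -(k' : ℤ)), d') ∧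
    SS L' = SS L ∧ L'.length = L.length ∧
    ∀ u < t, ((antStep 6 isLLRLRL)^[u] (II L, ((x : ℤ), -(k : ℤ)), d)).2.1 ∈ SS L := by
  induction t generalizing L x k d with
  | zero =>
    simp only [wrun, Option.some.injEq, Prod.mk.injEq] at h
    obtain ⟨rfl, rfl, rfl, rfl⟩ := h
    simp
  | succ t ih =>
    simp only [wrun, Option.bind_eq_some_iff] at h
    obtain ⟨⟨B1, x1, k1, d1⟩, h1, h2⟩ := h
    obtain ⟨a1, a2, a3, a4⟩ := step_sound h1
    obtain ⟨b1, b2, b3, b4⟩ := ih h2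
    refine ⟨?_, b2.trans a2, b3.trans a4, ?_⟩
    · rw [Function.iterate_succ_apply, a1, b1]
    · intro u hu
      cases u with
      | zero => exact a3
      | succ u =>
        rw [Function.iterate_succ_apply, a1, ← a2]
        exact b4 u (by omega)

/-! ### Highway condition on column lists -/

def ok (d2 d0 e0 : ℕ) : Prop := ∀ k < 9, dg d2 k ≤ 5 →
  if k + 2 < 9 ∧ dg d0 (k + 2) ≤ 5 then dg e0 (k + 2) = dg d2 k else dg d2 k = 0

instance (a b c : ℕ) : Decidable (ok a b c) := by unfold ok; infer_instance

def chk : List ℕ → List ℕ → Prop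
  | d0 :: d1 :: d2 :: D, e0 :: E => ok d2 d0 e0 ∧ chk (d1 :: d2 :: D) E
  | _ :: _ :: _ :: _, [] => False
  | _, _ => True

instance chkDec : (D E : List ℕ) → Decidable (chk D E)
  | d0 :: d1 :: d2 :: D, e0 :: E =>
    have := chkDec (d1 :: d2 :: D) E
    inferInstanceAs (Decidable (ok d2 d0 e0 ∧ chk (d1 :: d2 :: D) E))
  | _ :: _ :: _ :: _, [] => isFalse (by simp [chk])
  | [], _ => isTrue (by simp [chk])
  | [_], _ => isTrue (by simp [chk])
  | [_, _], _ => isTrue (by simp [chk])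

theorem chk_get (D E : List ℕ) (h : chk D E) (i : ℕ) (hi : i + 2 < D.length) :
    ok (D.getD (i + 2) 0) (D.getD i 0) (E.getD i 0) := by
  induction i generalizing D E with
  | zero =>
    match D, E, h, hi with
    | d0 :: d1 :: d2 :: D, e0 :: E, h, _ => exact h.1
  | succ i ih =>
    match D, E, h, hi with
    | d0 :: d1 :: d2 :: D, e0 :: E, h, hi =>
      have := ih (d1 :: d2 :: D) E h.2 (by simp at hi ⊢; omega)
      simpa using this

theorem highway_of {N : ℕ} {L L' : List ℕ}
    (h : wrun N (0 :: 0 :: L, 2, 0, .N) = some (L', 0, 2, .N)) (hp : ((2, 0) : Cell) ∈ SS (0 :: 0 :: L))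
    (hc : chk (0 :: 0 :: L) L') :
    ∃ (S : Set Cell) (P : Cell → ZMod 6) (p : Cell) (d : Dir),
      IsHighway 6 isLLRLRL N ((-2, -2) : Cell) S P p d := by
  obtain ⟨h1, h2, h3, h4⟩ := run_sound N h
  have e1 : (((2 : ℕ) : ℤ), -((0 : ℕ) : ℤ)) = ((2, 0) : Cell) := by simp
  rw [e1] at h1 h4
  refine ⟨SS (0 :: 0 :: L), II (0 :: 0 :: L), (2, 0), .N, SS_finite _, hp, ?_, h4, ?_, ?_, ?_⟩
  · intro q hq; unfold II; rw [if_neg hq]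
  · rw [h1]; simp
  · rw [h1]
  · intro q hq
    rw [h1]
    obtain ⟨x, k, rfl⟩ := exists_of_mem_SS hq
    have hq' := (mem_SS _ _ _).1 hq
    have hI : II (0 :: 0 :: L) ((x : ℤ), -(k : ℤ)) = ((dg ((0 :: 0 :: L).getD x 0) k : ℕ) : ZMod 6) := by
      unfold II; rw [if_pos hq]; simp only [Int.toNat_natCast, neg_neg]
    rw [hI]
    match x, hq, hq' with
    | 0, _, _ =>
      constructor
      · intro hs
        have := hs.1
        simp at this
      · intro _; simp [dg]
    | 1, _, _ =>
      constructor
      · intro hs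
        have := hs.1
        simp at this
      · intro _; simp [dg]
    | i + 2, _, hq' =>
      have hok := chk_get _ _ hc i hq'.1 k hq'.2.1 hq'.2.2
      have e2 : ((((i + 2 : ℕ) : ℤ), -(k : ℤ)) : Cell) + (-2, -2) = ((i : ℤ), -((k + 2 : ℕ) : ℤ)) := by
        ext <;> simp <;> ring
      rw [e2]
      have hlt : i < (0 :: 0 :: L).length := by have := hq'.1; omega
      constructor
      · intro hs
        have hs' := (mem_SS _ _ _).1 hs
        rw [if_pos ⟨hs'.2.1, hs'.2.2⟩] at hok
        show II L' _ = _
        unfold II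
        rw [h2, if_pos hs]
        simp only [Int.toNat_natCast, neg_neg]
        rw [hok]
      · intro hs
        rw [mem_SS] at hs
        rw [if_neg (fun hh => hs ⟨hlt, hh.1, hh.2⟩)] at hok
        rw [hok]; rfl

theorem chk_full (j : ℕ) : chk (D j) (E j) := by
  have key : ∀ j, chk (1359999 :: 1359999 :: (rp 1359999 j ++ [1359999, 2459999, 3599999]))
      (135009999 :: (rp 135009999 j ++ [245009999, 355009999, 310509999, 235099999])) := by
    intro j
    induction j with
    | zero => decide +kernel
    | succ j ih =>
      refine ⟨by decide +kernel, by decide +kernel, ?_⟩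
      exact ih
  unfold D E
  refine ⟨?_, ?_, ?_, ?_, ?_, ?_, ?_, ?_, ?_, key j⟩ <;> decide +kernel

theorem exists_highway (n : ℕ) : ∃ (S : Set Cell) (P : Cell → ZMod 6) (p : Cell) (d : Dir),
      IsHighway 6 isLLRLRL (220 + 24 * n) ((-2, -2) : Cell) S P p d := by
  match n with
  | 0 => exact highway_of base0 (by simp [SS, dg]) (by decide +kernel)
  | 1 => exact highway_of base1 (by simp [SS, dg]) (by decide +kernel)
  | j + 2 =>
    rw [show 220 + 24 * (j + 2) = 268 + 24 * j by ring]
    refine highway_of (full j) ?_ (chk_full j)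
    simp [SS, dg]
    omega

end Ant

namespace Ant

/-! ### Uniqueness of the period -/

section Uniq

variable {n : ℕ} (isL : ZMod n → Bool)

theorem local_run {N : ℕ} {S : Set Cell} {P : Cell → ZMod n} {p : Cell} {d : Dir}
    (hS : ∀ t < N, ((antStep n isL)^[t] (P, p, d)).2.1 ∈ S)
    (C : Cell → ZMod n) (v : Cell) (hC : ∀ q ∈ S, C (q + v) = P q) (t : ℕ) (ht : t ≤ N) :
    ((antStep n isL)^[t] (C, p + v, d)).2.1 = ((antStep n isL)^[t] (P, p, d)).2.1 + v ∧
    ((antStep n isL)^[t] (C, p + v, d)).2.2 = ((antStep n isL)^[t] (P, p, d)).2.2 ∧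
    (∀ q ∈ S, ((antStep n isL)^[t] (C, p + v, d)).1 (q + v) =
      ((antStep n isL)^[t] (P, p, d)).1 q) ∧
    (∀ q ∉ S, ((antStep n isL)^[t] (C, p + v, d)).1 (q + v) = C (q + v)) := by
  induction t with
  | zero => exact ⟨rfl, rfl, hC, fun _ _ => rfl⟩
  | succ t ih =>
    obtain ⟨h1, h2, h3, h4⟩ := ih (by omega)
    have hm := hS t (by omega)
    rw [Function.iterate_succ_apply', Function.iterate_succ_apply']
    generalize (antStep n isL)^[t] (C, p + v, d) = X at *
    generalize (antStep n isL)^[t] (P, p, d) = Y at *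
    obtain ⟨C1, p1, d1⟩ := X
    obtain ⟨C2, p2, d2⟩ := Y
    simp only at h1 h2 h3 h4 hm
    subst h1 h2
    have h5 := h3 p2 hm
    unfold antStep
    simp only [h5]
    refine ⟨by abel, trivial, ?_, ?_⟩
    · intro q hq
      by_cases hqp : q = p2
      · subst hqp; simp
      · rw [Function.update_of_ne (by simpa using hqp), Function.update_of_ne hqp]
        exact h3 q hq
    · intro q hq
      have hqp : q ≠ p2 := by rintro rfl; exact hq hm
      rw [Function.update_of_ne (by simpa using hqp)]
      exact h4 q hq

theorem highway_shift {N : ℕ} {v : Cell} {S : Set Cell} {P : Cell → ZMod n} {p : Cell} {d : Dir}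
    (h : IsHighway n isL N v S P p d) :
    ∀ q ∈ S, ((antStep n isL)^[N] (P, p, d)).1 (q + v) = P q := by
  obtain ⟨_, _, h3, h4, _, _, h7⟩ := h
  intro q hq
  by_cases hs : q + v ∈ S
  · exact (h7 q hq).1 hs
  · rw [(h7 q hq).2 hs]
    have := (local_run isL h4 P 0 (by simp) N le_rfl).2.2.2 (q + v) hs
    simp only [add_zero] at this
    rw [this, h3 _ hs]

theorem highway_periodic {N₁ N₂ : ℕ} {v : Cell} {S : Set Cell} {P : Cell → ZMod n} {p : Cell}
    {d : Dir} (h1 : IsHighway n isL N₁ v S P p d) (h2 : IsHighway n isL N₂ v S P p d)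
    (hlt : N₁ < N₂) :
    ∃ X : Config n, (antStep n isL)^[N₂ - N₁] X = X := by
  have s1 := highway_shift isL h1
  have s2 := highway_shift isL h2
  obtain ⟨_, _, _, _, a5, a6, _⟩ := h1
  obtain ⟨_, _, _, b4, b5, b6, _⟩ := h2
  have hsplit : (antStep n isL)^[N₂] (P, p, d) =
      (antStep n isL)^[N₂ - N₁] ((antStep n isL)^[N₁] (P, p, d)) := by
    rw [← Function.iterate_add_apply]; congr 2; omega
  refine ⟨(antStep n isL)^[N₁] (P, p, d), ?_⟩
  rw [hsplit] at s2 b5 b6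
  have hX : (antStep n isL)^[N₁] (P, p, d) =
      (((antStep n isL)^[N₁] (P, p, d)).1, p + v, d) := by
    rw [← a5]; nth_rewrite 4 [← a6]; rfl
  have hl := (local_run isL b4 _ v s1 (N₂ - N₁) (by omega)).2.2.2
  rw [← hX] at hl
  refine Prod.ext ?_ (Prod.ext (by rw [b5, a5]) (by rw [b6, a6]))
  funext q
  obtain ⟨r, rfl⟩ : ∃ r, q = r + v := ⟨q - v, by simp⟩
  by_cases hr : r ∈ S
  · rw [s2 r hr, s1 r hr]
  · exact hl r hr

end Uniq

/-- `true` for horizontal directions. -/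
def hor : Dir → ℤ
  | .E => 1 | .W => 1 | .N => 0 | .S => 0

theorem par_step (X : Config 6) :
    ((antStep 6 isLLRLRL X).2.1.1 + (antStep 6 isLLRLRL X).2.1.2 + hor (antStep 6 isLLRLRL X).2.2) % 2
      = (X.2.1.1 + X.2.1.2 + hor X.2.2) % 2 := by
  obtain ⟨C, ⟨x, y⟩, d⟩ := X
  unfold antStep
  by_cases h : isLLRLRL (C (x, y)) = true <;> cases d <;>
    simp [h, Dir.left, Dir.right, Dir.vec, hor] <;> omega

theorem no_periodic (m : ℕ) (hm : 0 < m) (X : Config 6) : (antStep 6 isLLRLRL)^[m] X ≠ X := by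
  intro hper
  set T := antStep 6 isLLRLRL with hT
  set f : ℕ → Config 6 := fun t => T^[t] X with hf
  have fs : ∀ t, f (t + 1) = T (f t) := fun t => Function.iterate_succ_apply' T t X
  have fper : ∀ t, f (t + m) = f t := by
    intro t; simp only [hf]; rw [Function.iterate_add_apply, hper]
  have fperk : ∀ k t, f (t + m * k) = f t := by
    intro k
    induction k with
    | zero => simp
    | succ k ih => intro t; rw [Nat.mul_succ, ← Nat.add_assoc, fper, ih]
  have fmod : ∀ t, f t = f (t % m) := by
    intro t
    conv_lhs => rw [← Nat.mod_add_div t m]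
    exact fperk _ _
  have par : ∀ t, ((f t).2.1.1 + (f t).2.1.2 + hor (f t).2.2) % 2
      = (X.2.1.1 + X.2.1.2 + hor X.2.2) % 2 := by
    intro t
    induction t with
    | zero => rfl
    | succ t ih => rw [fs, ← ih]; exact par_step _
  -- extremal cell
  obtain ⟨t0, ht0m, hmax0⟩ := Finset.exists_max_image (Finset.range m)
    (fun t => toLex ((f t).2.1.2, (f t).2.1.1)) ⟨0, by simpa using hm⟩
  have hmax : ∀ t, toLex ((f t).2.1.2, (f t).2.1.1) ≤ toLex ((f t0).2.1.2, (f t0).2.1.1) := by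
    intro t
    rw [fmod t]
    exact hmax0 _ (by simpa using Nat.mod_lt t hm)
  set q : Cell := (f t0).2.1 with hq
  have hmaxA : ∀ t, (f t).2.1 ≠ q + (0, 1) := by
    intro t h
    have := hmax t
    rw [h, Prod.Lex.toLex_le_toLex] at this
    simp at this
  have hmaxB : ∀ t, (f t).2.1 ≠ q + (1, 0) := by
    intro t h
    have := hmax t
    rw [h, Prod.Lex.toLex_le_toLex] at this
    simp at this
  -- incoming direction
  have hpos : ∀ t, (f (t + 1)).2.1 = (f t).2.1 + (f (t + 1)).2.2.vec := by
    intro t; rw [fs]; rfl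
  have hin : ∀ t, (f t).2.1 = q → (f t).2.2 = .E ∨ (f t).2.2 = .N := by
    intro t h
    have e : f t = f ((t + m - 1) + 1) := by
      rw [show t + m - 1 + 1 = t + m by omega, fper]
    have h1 := hpos (t + m - 1)
    rw [← e, h] at h1
    have hA := hmaxA (t + m - 1)
    have hB := hmaxB (t + m - 1)
    cases hd : (f t).2.2
    · simp
    · simp
    · exfalso; apply hB; rw [h1, hd, add_assoc]; simp [Dir.vec]
    · exfalso; apply hA; rw [h1, hd, add_assoc]; simp [Dir.vec]
  have hout : ∀ t, (f t).2.1 = q → (f (t + 1)).2.2 ≠ .E ∧ (f (t + 1)).2.2 ≠ .N := by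
    intro t h
    have h1 := hpos t
    constructor
    · intro hd; apply hmaxB (t + 1); rw [h1, hd, h]; rfl
    · intro hd; apply hmaxA (t + 1); rw [h1, hd, h]; rfl
  have hdir : ∀ t, (f (t + 1)).2.2 =
      if isLLRLRL ((f t).1 (f t).2.1) then (f t).2.2.left else (f t).2.2.right := by
    intro t; rw [fs]; rfl
  have hcol : ∀ t, (f (t + 1)).1 = Function.update (f t).1 (f t).2.1 ((f t).1 (f t).2.1 + 1) := by
    intro t; rw [fs]; rfl
  -- every visit turns the same way
  have hturn : ∀ t, (f t).2.1 = q →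
      (isLLRLRL ((f t).1 q) = true ↔ (f t).2.2 = .N) := by
    intro t h
    have h1 := hdir t
    have h2 := hout t h
    rw [h] at h1
    rcases hin t h with hd | hd <;> rw [hd] at h1 ⊢ <;>
      cases hb : isLLRLRL ((f t).1 q) <;> simp [hb, Dir.left, Dir.right] at h1 ⊢ <;>
      simp [h1] at h2
  have hsame : ∀ t u, (f t).2.1 = q → (f u).2.1 = q →
      isLLRLRL ((f t).1 q) = isLLRLRL ((f u).1 q) := by
    intro t u ht hu
    have p1 := par t
    have p2 := par u
    rw [← p2, ht, hu] at p1
    rw [Bool.eq_iff_iff, hturn t ht, hturn u hu]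
    rcases hin t ht with hd | hd <;> rcases hin u hu with he | he <;> rw [hd, he] at p1 ⊢ <;>
      simp [hor] at p1 ⊢ <;> omega
  -- next visit
  have hnext : ∀ t, (f t).2.1 = q → ∃ u, (f u).2.1 = q ∧ (f u).1 q = (f t).1 q + 1 := by
    intro t ht
    have hex : ∃ k, (f (t + 1 + k)).2.1 = q :=
      ⟨m - 1, by rw [show t + 1 + (m - 1) = t + m by omega, fper, ht]⟩
    classical
    have hk := Nat.find_spec hex
    have hmin := fun k => @Nat.find_min _ _ hex k
    refine ⟨t + 1 + Nat.find hex, hk, ?_⟩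
    have : ∀ k ≤ Nat.find hex, (f (t + 1 + k)).1 q = (f t).1 q + 1 := by
      intro k
      induction k with
      | zero => intro _; rw [Nat.add_zero, hcol, ht]; simp
      | succ k ih =>
        intro hle
        rw [← Nat.add_assoc, hcol, Function.update_of_ne (fun h => hmin k (by omega) h.symm)]
        exact ih (by omega)
    exact this _ le_rfl
  have hall : ∀ i : ℕ, ∃ u, (f u).2.1 = q ∧ (f u).1 q = (f t0).1 q + i := by
    intro i
    induction i with
    | zero => exact ⟨t0, rfl, by simp⟩
    | succ i ih =>
      obtain ⟨u, h1, h2⟩ := ih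
      obtain ⟨w, h3, h4⟩ := hnext u h1
      exact ⟨w, h3, by rw [h4, h2]; push_cast; ring⟩
  have hsym : ∀ a : ZMod 6, ∃ u, (f u).2.1 = q ∧ (f u).1 q = a := by
    intro a
    obtain ⟨u, h1, h2⟩ := hall (a - (f t0).1 q).val
    refine ⟨u, h1, ?_⟩
    rw [h2, ZMod.natCast_zmod_val]; ring
  obtain ⟨u, u1, u2⟩ := hsym 0
  obtain ⟨w, w1, w2⟩ := hsym 2
  have := hsame u w u1 w1
  rw [u2, w2] at this
  exact absurd this (by decide)

theorem period_unique (N₁ N₂ : ℕ) (v : Cell) (S : Set Cell) (P : Cell → ZMod 6) (p : Cell) (d : Dir)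
    (h1 : IsHighway 6 isLLRLRL N₁ v S P p d) (h2 : IsHighway 6 isLLRLRL N₂ v S P p d) :
    N₁ = N₂ := by
  rcases Nat.lt_trichotomy N₁ N₂ with h | h | h
  · obtain ⟨X, hX⟩ := highway_periodic _ h1 h2 h
    exact absurd hX (no_periodic _ (by omega) X)
  · exact h
  · obtain ⟨X, hX⟩ := highway_periodic _ h2 h1 h
    exact absurd hX (no_periodic _ (by omega) X)

end Ant

/-- The ant `LLRLRL` has infinitely many highways: the set of
periods `N` for which it admits a highway of period `N` and drift `(−2,−2)` is
infinite (it contains `220 + 24n` for every `n`), and a fixed highway configuration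
`(S, P, p, d)` can be a highway of drift `(−2,−2)` for at most one period `N`
(since `T_{LLRLRL}` has no periodic points), so these highways are pairwise
distinct. -/
theorem llrlrl_infinitely_many_highways :
    {N : ℕ | ∃ (S : Set Cell) (P : Cell → ZMod 6) (p : Cell) (d : Dir),
        IsHighway 6 isLLRLRL N ((-2, -2) : Cell) S P p d}.Infinite ∧
    (∀ n : ℕ, 220 + 24 * n ∈
      {N : ℕ | ∃ (S : Set Cell) (P : Cell → ZMod 6) (p : Cell) (d : Dir),
        IsHighway 6 isLLRLRL N ((-2, -2) : Cell) S P p d}) ∧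
    (∀ (N₁ N₂ : ℕ) (S : Set Cell) (P : Cell → ZMod 6) (p : Cell) (d : Dir),
      IsHighway 6 isLLRLRL N₁ ((-2, -2) : Cell) S P p d →
      IsHighway 6 isLLRLRL N₂ ((-2, -2) : Cell) S P p d → N₁ = N₂) := by
  refine ⟨?_, Ant.exists_highway, fun N₁ N₂ S P p d h1 h2 => Ant.period_unique N₁ N₂ _ S P p d h1 h2⟩
  refine Set.infinite_of_injective_forall_mem (f := fun n : ℕ => 220 + 24 * n) ?_ Ant.exists_highway
  intro a b h
  simp only at h
  omega
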